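/- No facets (variational core of the no-facets theorem): let R ⊂ ℝ^d be a compact set, and let ω, ω_0 : R → ℝ^d be Lebesgue-measurable maps taking values in the Newton polytope N, such that ω_0(x) lies in the interior of N for almost every x ∈ R. If the set A := {x ∈ R : ω(x) ∈ frontier(N)} has positive Lebesgue measure, then there exists ε ∈ (0,1) such that ∫_R σ((1−ε)·ω(x) + ε·ω_0(x)) dx < ∫_R σ(ω(x)) dx. -/

import Mathlib

open MeasureTheory

/-- The free energy `F(α) = log(Σ_{j=1}^D exp(⟨e_j, α⟩))` of the multinomial dimer model. -/
noncomputable def freeEnergy (d D : ℕ) (e : Fin D → (Fin d → ℝ)) (α : Fin d → ℝ) : ℝ :=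
  Real.log (∑ j, Real.exp (∑ i, e j i * α i))

/-- The surface tension `σ(s) = sup_{α ∈ ℝ^d} (⟨s, α⟩ − F(α))`, the Legendre dual of `F`. -/
noncomputable def surfTension (d D : ℕ) (e : Fin D → (Fin d → ℝ)) (s : Fin d → ℝ) : ℝ :=
  sSup (Set.range fun α : Fin d → ℝ => (∑ i, s i * α i) - freeEnergy d D e α)

/-!
A frontier point `s` of the Newton polytope lies in a proper exposed face. Let `J` be the set of
vertices on that face, and write a given interior point `t` as a convex combination of all the
vertices; it puts mass `m > 0` off `J`. Sending `α` to infinity in the direction of the outward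
normal turns the log-sum-exp over all vertices into the one over `J`, while splitting the full
log-sum-exp into its parts over `J` and `Jᶜ` gains an entropy `-θ log θ` with `θ = ε m`. Together
these give `σ((1 - ε) s + ε t) ≤ (1 - ε) σ(s) + ε m log (ε m)`: the slope of `σ` at `s` towards `t`
is `-∞`. Since `σ` is convex, the difference quotients of `ε ↦ σ((1 - ε) ω + ε ω₀)` are bounded
above by the one at `ε = 1`, so Fatou's lemma shows that the difference quotients of the integral
tend to `-∞` as soon as `ω` meets the frontier on a set of positive measure.
-/

open Set Filter Topology

section Integral

variable {X : Type*} [MeasurableSpace X] {μ : Measure X}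

lemma lintegral_liminf_eq_top_of_frequently_tendsto {f : ℕ → X → ENNReal}
    (hf : ∀ n, AEMeasurable (f n) μ) (htop : ∃ᵐ x ∂μ, Tendsto (f · x) atTop (𝓝 ⊤)) :
    ∫⁻ x, liminf (f · x) atTop ∂μ = ⊤ := by
  have hmeas : AEMeasurable (fun x => liminf (f · x) atTop) μ := by
    simp only [liminf_eq_iSup_iInf_of_nat]
    exact .iSup fun n => .biInf _ (to_countable _) fun k _ => hf k
  exact lintegral_eq_top_of_measure_eq_top_ne_zero hmeas
    (frequently_ae_iff.1 (htop.mono fun _ h => h.liminf_eq))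

lemma tendsto_integral_atTop_of_frequently_tendsto_atTop {f : ℕ → X → ℝ} {g : X → ℝ}
    (hf : ∀ n, Integrable (f n) μ) (hg : Integrable g μ) (hgf : ∀ n, g ≤ᵐ[μ] f n)
    (htop : ∃ᵐ x ∂μ, Tendsto (f · x) atTop atTop) :
    Tendsto (fun n => ∫ x, f n x ∂μ) atTop atTop := by
  have hmeas (n : ℕ) : AEMeasurable (fun x => ENNReal.ofReal (f n x - g x)) μ :=
    ((hf n).sub hg).aemeasurable.ennreal_ofReal
  have htop' : ∃ᵐ x ∂μ, Tendsto (fun n => ENNReal.ofReal (f n x - g x)) atTop (𝓝 ⊤) :=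
    htop.mono fun x hx =>
      ENNReal.tendsto_ofReal_nhds_top.2 (tendsto_atTop_add_const_right _ (-g x) hx)
  have hliminf : ⊤ ≤ liminf (fun n => ∫⁻ x, ENNReal.ofReal (f n x - g x) ∂μ) atTop :=
    lintegral_liminf_eq_top_of_frequently_tendsto hmeas htop' ▸ lintegral_liminf_le' hmeas
  have hofReal (n : ℕ) :
      ENNReal.ofReal (∫ x, f n x - g x ∂μ) = ∫⁻ x, ENNReal.ofReal (f n x - g x) ∂μ :=
    ofReal_integral_eq_lintegral_ofReal ((hf n).sub hg)
      ((hgf n).mono fun _ hx => sub_nonneg.2 hx)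
  have hsub : Tendsto (fun n => ∫ x, f n x - g x ∂μ) atTop atTop := by
    simp only [← ENNReal.tendsto_ofReal_nhds_top, hofReal]
    exact tendsto_of_le_liminf_of_limsup_le hliminf le_top
  simpa [integral_sub (hf _) hg] using tendsto_atTop_add_const_right _ (∫ x, g x ∂μ) hsub

lemma exists_integral_lt_of_frequently_tendsto_slope_atBot {φ : ℝ → X → ℝ}
    (hconv : ∀ᵐ x ∂μ, ConvexOn ℝ (Icc 0 1) (φ · x))
    (hint : ∀ ε ∈ Icc (0 : ℝ) 1, Integrable (φ ε) μ)
    (hslope : ∃ᵐ x ∂μ, Tendsto (slope (φ · x) 0) (𝓝[>] 0) atBot) :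
    ∃ ε ∈ Ioo (0 : ℝ) 1, ∫ x, φ ε x ∂μ < ∫ x, φ 0 x ∂μ := by
  obtain ⟨u, -, hu, hu0⟩ := exists_seq_strictAnti_tendsto' (zero_lt_one' ℝ)
  have hu0' : Tendsto u atTop (𝓝[>] 0) :=
    tendsto_nhdsWithin_iff.2 ⟨hu0, .of_forall fun n => (hu n).1⟩
  have hzero : (0 : ℝ) ∈ Icc (0 : ℝ) 1 := left_mem_Icc.2 zero_le_one
  have hslope_int : ∀ ε ∈ Icc (0 : ℝ) 1, Integrable (fun x => -slope (φ · x) 0 ε) μ :=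
    fun ε hε => (((hint ε hε).sub (hint 0 hzero)).smul (ε - 0)⁻¹).neg
  have hmono (n : ℕ) : (fun x => -slope (φ · x) 0 1) ≤ᵐ[μ] fun x => -slope (φ · x) 0 (u n) :=
    hconv.mono fun x hx => neg_le_neg <| hx.slope_mono hzero
      ⟨Ioo_subset_Icc_self (hu n), (hu n).1.ne'⟩ ⟨right_mem_Icc.2 zero_le_one, one_ne_zero⟩
      (hu n).2.le
  have htop : Tendsto (fun n => ∫ x, -slope (φ · x) 0 (u n) ∂μ) atTop atTop :=
    tendsto_integral_atTop_of_frequently_tendsto_atTop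
      (fun n => hslope_int _ (Ioo_subset_Icc_self (hu n)))
      (hslope_int 1 (right_mem_Icc.2 zero_le_one)) hmono
      (hslope.mono fun x hx => tendsto_neg_atBot_atTop.comp (hx.comp hu0'))
  obtain ⟨n, hn⟩ := (htop.eventually_gt_atTop 0).exists
  refine ⟨u n, hu n, ?_⟩
  simp only [slope_def_field, sub_zero] at hn
  rw [integral_neg, integral_div,
    integral_sub (hint _ (Ioo_subset_Icc_self (hu n))) (hint 0 hzero), neg_pos] at hn
  exact sub_neg.1 (neg_of_div_neg_left hn (hu n).1.le)

end Integral

section Convexity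

lemma exists_strongDual_lt_interior_of_mem_frontier {E : Type*} [AddCommGroup E] [Module ℝ E]
    [TopologicalSpace E] [IsTopologicalAddGroup E] [ContinuousSMul ℝ E] {A : Set E} {x : E}
    (hA : Convex ℝ A) (hne : (interior A).Nonempty) (hx : x ∈ frontier A) :
    ∃ f : StrongDual ℝ E, (∀ a ∈ interior A, f a < f x) ∧ ∀ a ∈ A, f a ≤ f x := by
  obtain ⟨f, hf⟩ := geometric_hahn_banach_open_point hA.interior isOpen_interior hx.2
  refine ⟨f, hf, fun a ha => ?_⟩
  have hmem : a ∈ closure (interior A) :=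
    hA.closure_interior_eq_closure_of_nonempty_interior hne ▸ subset_closure ha
  exact closure_minimal (fun b hb => (hf b hb).le) (isClosed_Iic.preimage f.continuous) hmem

lemma convexHull_range_eq_image_stdSimplex {R ι E : Type*} [Field R] [LinearOrder R]
    [IsStrictOrderedRing R] [Fintype ι] [AddCommGroup E] [Module R E] (v : ι → E) :
    convexHull R (range v) = (fun q : ι → R => ∑ j, q j • v j) '' stdSimplex R ι := by
  classical
  have hrange : range v = Fintype.linearCombination R v '' range fun j => Pi.single j 1 := by
    simp [← range_comp, Function.comp_def]
  rw [hrange, ← LinearMap.image_convexHull, convexHull_rangle_single_eq_stdSimplex]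
  rfl

end Convexity

section LogSumExp

variable {ι : Type*} {J K : Finset ι}

/-- The log-sum-exp `log (∑ j ∈ J, exp (x j))` over a finite index set; allowing a subset `J` of
the indices gives the free energy of a face of the Newton polytope. It is `0` for `J = ∅`. -/
noncomputable def logSumExp (J : Finset ι) (x : ι → ℝ) : ℝ :=
  Real.log (∑ j ∈ J, Real.exp (x j))

lemma sum_exp_pos (hJ : J.Nonempty) (x : ι → ℝ) : 0 < ∑ j ∈ J, Real.exp (x j) :=
  Finset.sum_pos (fun _ _ => Real.exp_pos _) hJ

lemma le_logSumExp {j : ι} (hj : j ∈ J) (x : ι → ℝ) : x j ≤ logSumExp J x :=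
  (Real.le_log_iff_exp_le (sum_exp_pos ⟨j, hj⟩ x)).2 <|
    Finset.single_le_sum (f := fun j => Real.exp (x j)) (fun _ _ => (Real.exp_pos _).le) hj

lemma sum_mul_le_sum_mul_logSumExp {q : ι → ℝ} (hq : ∀ j ∈ J, 0 ≤ q j) (x : ι → ℝ) :
    ∑ j ∈ J, q j * x j ≤ (∑ j ∈ J, q j) * logSumExp J x := by
  rw [Finset.sum_mul]
  exact Finset.sum_le_sum fun j hj => mul_le_mul_of_nonneg_left (le_logSumExp hj x) (hq j hj)

lemma logSumExp_const_add (hJ : J.Nonempty) (c : ℝ) (x : ι → ℝ) :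
    logSumExp J (fun j => c + x j) = c + logSumExp J x := by
  simp only [logSumExp, Real.exp_add, ← Finset.mul_sum]
  rw [Real.log_mul (Real.exp_ne_zero c) (sum_exp_pos hJ x).ne', Real.log_exp]

lemma continuous_logSumExp (J : Finset ι) : Continuous (logSumExp J) := by
  rcases J.eq_empty_or_nonempty with rfl | hJ
  · exact continuous_const.congr (f := fun _ => (0 : ℝ)) fun x => by simp [logSumExp]
  · exact Continuous.log (by fun_prop) fun x => (sum_exp_pos hJ x).ne'

lemma tendsto_logSumExp_sub_mul_atTop (hJK : J ⊆ K) (hJ : J.Nonempty) {c : ι → ℝ}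
    (hc : ∀ j ∈ J, c j = 0) (hc' : ∀ j ∈ K, j ∉ J → 0 < c j) (x : ι → ℝ) :
    Tendsto (fun l : ℝ => logSumExp K fun j => x j - l * c j) atTop (𝓝 (logSumExp J x)) := by
  classical
  have hterm : ∀ j ∈ K, Tendsto (fun l : ℝ => Real.exp (x j - l * c j)) atTop
      (𝓝 (if j ∈ J then Real.exp (x j) else 0)) := fun j hj => by
    split_ifs with hjJ
    · simp [hc j hjJ]
    · exact Real.tendsto_exp_atBot.comp <| tendsto_atBot_add_const_left _ (x j) <|
        tendsto_neg_atTop_atBot.comp (tendsto_id.atTop_mul_const (hc' j hj hjJ))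
  have hsum := tendsto_finsetSum K hterm
  rw [Finset.sum_ite_mem, Finset.inter_eq_right.2 hJK] at hsum
  exact hsum.log (sum_exp_pos hJ x).ne'

lemma log_add_ge_add_negMulLog {a b θ : ℝ} (ha : 0 < a) (hb : 0 < b) (hθ : θ ∈ Ioo (0 : ℝ) 1) :
    (1 - θ) * Real.log a + θ * Real.log b + Real.negMulLog θ ≤ Real.log (a + b) := by
  obtain ⟨hθ0, hθ1⟩ := hθ
  have hconc := strictConcaveOn_log_Ioi.concaveOn.2 ha (div_pos hb hθ0) (sub_pos.2 hθ1).le hθ0.le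
    (sub_add_cancel 1 θ)
  simp only [smul_eq_mul, mul_div_cancel₀ _ hθ0.ne', Real.log_div hb.ne' hθ0.ne'] at hconc
  calc (1 - θ) * Real.log a + θ * Real.log b + Real.negMulLog θ
      = (1 - θ) * Real.log a + θ * (Real.log b - Real.log θ) := by rw [Real.negMulLog]; ring
    _ ≤ Real.log ((1 - θ) * a + b) := hconc
    _ ≤ Real.log (a + b) :=
        Real.log_le_log (add_pos (mul_pos (sub_pos.2 hθ1) ha) hb) (by nlinarith)

lemma logSumExp_union_ge_add_negMulLog [DecidableEq ι] (hJK : Disjoint J K) (hJ : J.Nonempty)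
    (hK : K.Nonempty) {θ : ℝ} (hθ : θ ∈ Ioo (0 : ℝ) 1) (x : ι → ℝ) :
    (1 - θ) * logSumExp J x + θ * logSumExp K x + Real.negMulLog θ ≤ logSumExp (J ∪ K) x := by
  simp only [logSumExp, Finset.sum_union hJK]
  exact log_add_ge_add_negMulLog (sum_exp_pos hJ x) (sum_exp_pos hK x) hθ

end LogSumExp

section SurfaceTension

variable {d D : ℕ} {e : Fin D → Fin d → ℝ} {s t : Fin d → ℝ}

lemma freeEnergy_eq_logSumExp (α : Fin d → ℝ) :
    freeEnergy d D e α = logSumExp Finset.univ fun j => e j ⬝ᵥ α := rfl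

lemma surfTension_eq_iSup (s : Fin d → ℝ) :
    surfTension d D e s = ⨆ α, (s ⬝ᵥ α - freeEnergy d D e α) := rfl

lemma exists_dotProduct_le_of_mem_convexHull (hs : s ∈ convexHull ℝ (range e)) (α : Fin d → ℝ) :
    ∃ j, s ⬝ᵥ α ≤ e j ⬝ᵥ α := by
  have hconv : ConvexOn ℝ (convexHull ℝ (range e)) (dotProductEquiv ℝ (Fin d) α) :=
    LinearMap.convexOn _ (convex_convexHull ℝ _)
  obtain ⟨_, ⟨j, rfl⟩, hj⟩ := hconv.exists_ge_of_mem_convexHull (subset_convexHull ℝ _) hs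
  exact ⟨j, by simpa [dotProduct_comm α] using hj⟩

lemma dotProduct_le_freeEnergy (hs : s ∈ convexHull ℝ (range e)) (α : Fin d → ℝ) :
    s ⬝ᵥ α ≤ freeEnergy d D e α := by
  obtain ⟨j, hj⟩ := exists_dotProduct_le_of_mem_convexHull hs α
  exact hj.trans (le_logSumExp (Finset.mem_univ j) fun j => e j ⬝ᵥ α)

lemma dotProduct_sub_freeEnergy_le_surfTension (hs : s ∈ convexHull ℝ (range e))
    (α : Fin d → ℝ) : s ⬝ᵥ α - freeEnergy d D e α ≤ surfTension d D e s :=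
  le_ciSup (f := fun α => s ⬝ᵥ α - freeEnergy d D e α)
    ⟨0, forall_mem_range.2 fun α => sub_nonpos.2 (dotProduct_le_freeEnergy hs α)⟩ α

lemma surfTension_mem_Icc (hs : s ∈ convexHull ℝ (range e)) :
    surfTension d D e s ∈ Icc (-Real.log D) 0 :=
  ⟨by simpa [freeEnergy] using dotProduct_sub_freeEnergy_le_surfTension hs 0,
    ciSup_le fun α => sub_nonpos.2 (dotProduct_le_freeEnergy hs α)⟩

lemma convexOn_surfTension : ConvexOn ℝ (convexHull ℝ (range e)) (surfTension d D e) := by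
  refine ⟨convex_convexHull ℝ _, fun s hs t ht a b ha hb hab => ciSup_le fun α => ?_⟩
  calc (a • s + b • t) ⬝ᵥ α - freeEnergy d D e α
      = a * (s ⬝ᵥ α - freeEnergy d D e α) + b * (t ⬝ᵥ α - freeEnergy d D e α) := by
        simp only [add_dotProduct, smul_dotProduct, smul_eq_mul]
        linear_combination freeEnergy d D e α * hab
    _ ≤ a • surfTension d D e s + b • surfTension d D e t :=
        add_le_add
          (mul_le_mul_of_nonneg_left (dotProduct_sub_freeEnergy_le_surfTension hs α) ha)
          (mul_le_mul_of_nonneg_left (dotProduct_sub_freeEnergy_le_surfTension ht α) hb)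

lemma continuous_freeEnergy : Continuous (freeEnergy d D e) :=
  (continuous_logSumExp Finset.univ).comp
    (continuous_pi fun _ => continuous_const.dotProduct continuous_id)

lemma measurable_surfTension : Measurable (surfTension d D e) := by
  obtain ⟨S, hScount, hSdense⟩ := TopologicalSpace.exists_countable_dense (Fin d → ℝ)
  have : Countable S := hScount.to_subtype
  have hsup : surfTension d D e = fun s => ⨆ α : S, (s ⬝ᵥ (α : Fin d → ℝ) - freeEnergy d D e α) :=
    funext fun s => (hSdense.ciSup'
      ((continuous_const.dotProduct continuous_id).sub continuous_freeEnergy)).symm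
  rw [hsup]
  exact .iSup fun α =>
    ((continuous_id.dotProduct continuous_const).sub continuous_const).measurable

lemma integrable_surfTension_comp {X : Type*} [MeasurableSpace X] {μ : Measure X}
    [IsFiniteMeasure μ] {ω : X → Fin d → ℝ} (hω : AEMeasurable ω μ)
    (hωN : ∀ᵐ x ∂μ, ω x ∈ convexHull ℝ (range e)) :
    Integrable (fun x => surfTension d D e (ω x)) μ :=
  .of_mem_Icc (-Real.log D) 0 (measurable_surfTension.comp_aemeasurable hω)
    (hωN.mono fun _ => surfTension_mem_Icc)

end SurfaceTension

section Frontier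

variable {d D : ℕ} {e : Fin D → Fin d → ℝ} {s t : Fin d → ℝ}

lemma exists_dotProduct_eq_of_mem_convexHull {ν : Fin d → ℝ}
    (hs : s ∈ convexHull ℝ (range e)) (hν : ∀ j, e j ⬝ᵥ ν ≤ s ⬝ᵥ ν) :
    ∃ j, e j ⬝ᵥ ν = s ⬝ᵥ ν :=
  (exists_dotProduct_le_of_mem_convexHull hs ν).imp fun j => (hν j).antisymm

lemma exists_supporting_normal_of_mem_frontier
    (hs : s ∈ frontier (convexHull ℝ (range e))) (ht : t ∈ interior (convexHull ℝ (range e))) :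
    ∃ ν : Fin d → ℝ, t ⬝ᵥ ν < s ⬝ᵥ ν ∧ ∀ j, e j ⬝ᵥ ν ≤ s ⬝ᵥ ν := by
  obtain ⟨f, hlt, hle⟩ :=
    exists_strongDual_lt_interior_of_mem_frontier (convex_convexHull ℝ _) ⟨t, ht⟩ hs
  have hf (a : Fin d → ℝ) : a ⬝ᵥ (dotProductEquiv ℝ (Fin d)).symm f.toLinearMap = f a := by
    rw [dotProduct_comm]
    exact LinearMap.congr_fun ((dotProductEquiv ℝ (Fin d)).apply_symm_apply f.toLinearMap) a
  refine ⟨(dotProductEquiv ℝ (Fin d)).symm f.toLinearMap, ?_, fun j => ?_⟩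
  · simpa only [hf] using hlt t ht
  · simpa only [hf] using hle _ (subset_convexHull ℝ _ (mem_range_self j))

lemma dotProduct_sub_logSumExp_face_le_surfTension {ν : Fin d → ℝ} {J : Finset (Fin D)}
    (hs : s ∈ convexHull ℝ (range e)) (hJne : J.Nonempty) (hJ : ∀ j ∈ J, e j ⬝ᵥ ν = s ⬝ᵥ ν)
    (hJc : ∀ j ∉ J, e j ⬝ᵥ ν < s ⬝ᵥ ν) (α : Fin d → ℝ) :
    s ⬝ᵥ α - logSumExp J (fun j => e j ⬝ᵥ α) ≤ surfTension d D e s := by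
  have hlim : Tendsto (fun l : ℝ => s ⬝ᵥ α -
      logSumExp Finset.univ fun j => e j ⬝ᵥ α - l * (s ⬝ᵥ ν - e j ⬝ᵥ ν)) atTop
      (𝓝 (s ⬝ᵥ α - logSumExp J fun j => e j ⬝ᵥ α)) :=
    (tendsto_logSumExp_sub_mul_atTop J.subset_univ hJne (fun j hj => by rw [hJ j hj, sub_self])
      (fun j _ hj => sub_pos.2 (hJc j hj)) _).const_sub _
  refine le_of_tendsto' hlim fun l => ?_
  have hshift (j : Fin D) : e j ⬝ᵥ (α + l • ν) =
      l * (s ⬝ᵥ ν) + (e j ⬝ᵥ α - l * (s ⬝ᵥ ν - e j ⬝ᵥ ν)) := by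
    rw [dotProduct_add, dotProduct_smul, smul_eq_mul]
    ring
  calc s ⬝ᵥ α - logSumExp Finset.univ (fun j => e j ⬝ᵥ α - l * (s ⬝ᵥ ν - e j ⬝ᵥ ν))
      = s ⬝ᵥ (α + l • ν) - freeEnergy d D e (α + l • ν) := by
        simp only [freeEnergy_eq_logSumExp, hshift]
        rw [logSumExp_const_add (hJne.mono J.subset_univ), dotProduct_add, dotProduct_smul,
          smul_eq_mul]
        ring
    _ ≤ surfTension d D e s := dotProduct_sub_freeEnergy_le_surfTension hs _

lemma sum_smul_dotProduct_le_logSumExp_compl {q : Fin D → ℝ} (hq : q ∈ stdSimplex ℝ (Fin D))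
    (J : Finset (Fin D)) (α : Fin d → ℝ) :
    (∑ j, q j • e j) ⬝ᵥ α ≤ (1 - ∑ j ∈ Jᶜ, q j) * logSumExp J (fun j => e j ⬝ᵥ α) +
      (∑ j ∈ Jᶜ, q j) * logSumExp Jᶜ (fun j => e j ⬝ᵥ α) := by
  have hmass : 1 - ∑ j ∈ Jᶜ, q j = ∑ j ∈ J, q j := by
    rw [← hq.2, ← Finset.sum_add_sum_compl J, add_sub_cancel_right]
  simp only [sum_dotProduct, smul_dotProduct, smul_eq_mul, hmass]
  rw [← Finset.sum_add_sum_compl J]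
  exact add_le_add (sum_mul_le_sum_mul_logSumExp (fun j _ => hq.1 j) _)
    (sum_mul_le_sum_mul_logSumExp (fun j _ => hq.1 j) _)

lemma sum_compl_pos_of_dotProduct_lt {ν : Fin d → ℝ} {c : ℝ} {q : Fin D → ℝ}
    {J : Finset (Fin D)} (hq : q ∈ stdSimplex ℝ (Fin D)) (hJ : ∀ j ∈ J, e j ⬝ᵥ ν = c)
    (hlt : (∑ j, q j • e j) ⬝ᵥ ν < c) : 0 < ∑ j ∈ Jᶜ, q j := by
  refine (Finset.sum_nonneg fun j _ => hq.1 j).lt_of_ne' fun hzero => hlt.ne ?_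
  have hq0 := (Finset.sum_eq_zero_iff_of_nonneg fun j _ => hq.1 j).1 hzero
  calc (∑ j, q j • e j) ⬝ᵥ ν = ∑ j, q j * (e j ⬝ᵥ ν) := by
        simp only [sum_dotProduct, smul_dotProduct, smul_eq_mul]
    _ = ∑ j, q j * c := Finset.sum_congr rfl fun j _ => by
        by_cases hj : j ∈ J
        · rw [hJ j hj]
        · rw [hq0 j (Finset.mem_compl.2 hj), zero_mul, zero_mul]
    _ = c := by rw [← Finset.sum_mul, hq.2, one_mul]

lemma surfTension_add_smul_le_sub_negMulLog {ν : Fin d → ℝ} {q : Fin D → ℝ}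
    {J : Finset (Fin D)} (hs : s ∈ convexHull ℝ (range e)) (hq : q ∈ stdSimplex ℝ (Fin D))
    (hJne : J.Nonempty) (hJ : ∀ j ∈ J, e j ⬝ᵥ ν = s ⬝ᵥ ν) (hJc : ∀ j ∉ J, e j ⬝ᵥ ν < s ⬝ᵥ ν)
    (hm : 0 < ∑ j ∈ Jᶜ, q j) {ε : ℝ} (hε : ε ∈ Ioo (0 : ℝ) 1) :
    surfTension d D e ((1 - ε) • s + ε • ∑ j, q j • e j) ≤
      (1 - ε) * surfTension d D e s - Real.negMulLog (ε * ∑ j ∈ Jᶜ, q j) := by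
  have hm1 : ∑ j ∈ Jᶜ, q j ≤ 1 :=
    hq.2 ▸ Finset.sum_le_univ_sum_of_nonneg hq.1
  have hθ : ε * ∑ j ∈ Jᶜ, q j ∈ Ioo (0 : ℝ) 1 :=
    ⟨mul_pos hε.1 hm, mul_lt_one_of_nonneg_of_lt_one_left hε.1.le hε.2 hm1⟩
  refine ciSup_le fun α => ?_
  have hface := mul_le_mul_of_nonneg_left
    (dotProduct_sub_logSumExp_face_le_surfTension hs hJne hJ hJc α) (sub_nonneg.2 hε.2.le)
  have hmix := mul_le_mul_of_nonneg_left
    (sum_smul_dotProduct_le_logSumExp_compl (e := e) hq J α) hε.1.le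
  have hentropy : _ ≤ freeEnergy d D e α := Finset.union_compl J ▸
    logSumExp_union_ge_add_negMulLog disjoint_compl_right hJne
      (Finset.nonempty_of_sum_ne_zero hm.ne') hθ fun j => e j ⬝ᵥ α
  change ((1 - ε) • s + ε • ∑ j, q j • e j) ⬝ᵥ α - freeEnergy d D e α ≤ _
  rw [add_dotProduct, smul_dotProduct, smul_dotProduct, smul_eq_mul, smul_eq_mul]
  linear_combination hface + hmix + hentropy

lemma exists_surfTension_le_sub_negMulLog_of_mem_frontier
    (hs : s ∈ convexHull ℝ (range e)) (hsN : s ∈ frontier (convexHull ℝ (range e)))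
    (ht : t ∈ interior (convexHull ℝ (range e))) :
    ∃ m : ℝ, 0 < m ∧ ∀ ε ∈ Ioo (0 : ℝ) 1, surfTension d D e ((1 - ε) • s + ε • t) ≤
      (1 - ε) * surfTension d D e s - Real.negMulLog (ε * m) := by
  obtain ⟨ν, htν, hν⟩ := exists_supporting_normal_of_mem_frontier hsN ht
  obtain ⟨q, hq, rfl⟩ := convexHull_range_eq_image_stdSimplex (R := ℝ) e ▸ interior_subset ht
  obtain ⟨j₀, hj₀⟩ := exists_dotProduct_eq_of_mem_convexHull hs hν
  let J : Finset (Fin D) := {j | e j ⬝ᵥ ν = s ⬝ᵥ ν}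
  have hJ : ∀ j ∈ J, e j ⬝ᵥ ν = s ⬝ᵥ ν := fun j hj => (Finset.mem_filter.1 hj).2
  have hJc : ∀ j ∉ J, e j ⬝ᵥ ν < s ⬝ᵥ ν := fun j hj =>
    (hν j).lt_of_ne fun h => hj (Finset.mem_filter.2 ⟨Finset.mem_univ j, h⟩)
  have hJne : J.Nonempty := ⟨j₀, Finset.mem_filter.2 ⟨Finset.mem_univ j₀, hj₀⟩⟩
  have hm : 0 < ∑ j ∈ Jᶜ, q j := sum_compl_pos_of_dotProduct_lt hq hJ htν
  exact ⟨_, hm, fun ε hε => surfTension_add_smul_le_sub_negMulLog hs hq hJne hJ hJc hm hε⟩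

lemma tendsto_slope_surfTension_atBot_of_mem_frontier
    (hs : s ∈ convexHull ℝ (range e)) (hsN : s ∈ frontier (convexHull ℝ (range e)))
    (ht : t ∈ interior (convexHull ℝ (range e))) :
    Tendsto (slope (fun ε : ℝ => surfTension d D e (AffineMap.lineMap s t ε)) 0) (𝓝[>] 0)
      atBot := by
  obtain ⟨m, hm, hle⟩ := exists_surfTension_le_sub_negMulLog_of_mem_frontier hs hsN ht
  have hbound : ∀ᶠ ε in 𝓝[>] (0 : ℝ),
      slope (fun ε : ℝ => surfTension d D e (AffineMap.lineMap s t ε)) 0 ε ≤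
        m * Real.log (ε * m) + -surfTension d D e s := by
    filter_upwards [Ioo_mem_nhdsGT (zero_lt_one' ℝ)] with ε hε
    rw [slope_def_field, AffineMap.lineMap_apply_zero, AffineMap.lineMap_apply_module, sub_zero,
      div_le_iff₀ hε.1]
    have hle' := hle ε hε
    rw [Real.negMulLog] at hle'
    linarith
  have hlog : Tendsto (fun ε : ℝ => Real.log (ε * m)) (𝓝[>] 0) atBot := by
    refine Real.tendsto_log_nhdsGT_zero.comp (tendsto_nhdsWithin_iff.2 ⟨?_, ?_⟩)
    · exact tendsto_nhdsWithin_of_tendsto_nhds ((continuous_mul_const m).tendsto' 0 0 (zero_mul m))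
    · filter_upwards [self_mem_nhdsWithin] with ε hε using mul_pos hε hm
  exact tendsto_atBot_mono' _ hbound
    (tendsto_atBot_add_const_right _ _ (hlog.const_mul_atBot hm))

end Frontier

theorem no_facets_variational_core_general {X : Type*} [MeasurableSpace X] {μ : Measure X}
    [IsFiniteMeasure μ] {d D : ℕ} {e : Fin D → Fin d → ℝ} {ω ω₀ : X → Fin d → ℝ}
    (hω : AEMeasurable ω μ) (hω₀ : AEMeasurable ω₀ μ)
    (hωN : ∀ᵐ x ∂μ, ω x ∈ convexHull ℝ (range e))
    (hω₀int : ∀ᵐ x ∂μ, ω₀ x ∈ interior (convexHull ℝ (range e)))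
    (hfrontier : ∃ᵐ x ∂μ, ω x ∈ frontier (convexHull ℝ (range e))) :
    ∃ ε ∈ Ioo (0 : ℝ) 1,
      ∫ x, surfTension d D e ((1 - ε) • ω x + ε • ω₀ x) ∂μ <
        ∫ x, surfTension d D e (ω x) ∂μ := by
  have hmem : ∀ᵐ x ∂μ, ∀ ε ∈ Icc (0 : ℝ) 1,
      AffineMap.lineMap (ω x) (ω₀ x) ε ∈ convexHull ℝ (range e) := by
    filter_upwards [hωN, hω₀int] with x hx hx₀ ε hε
    exact (convex_convexHull ℝ _).lineMap_mem hx (interior_subset hx₀) hε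
  have hconv : ∀ᵐ x ∂μ, ConvexOn ℝ (Icc 0 1)
      fun ε : ℝ => surfTension d D e (AffineMap.lineMap (ω x) (ω₀ x) ε) :=
    hmem.mono fun x hx =>
      (convexOn_surfTension.comp_affineMap (AffineMap.lineMap (ω x) (ω₀ x))).subset hx
        (convex_Icc 0 1)
  have hint : ∀ ε ∈ Icc (0 : ℝ) 1,
      Integrable (fun x => surfTension d D e (AffineMap.lineMap (ω x) (ω₀ x) ε)) μ := fun ε hε =>
    integrable_surfTension_comp
      (by simp only [AffineMap.lineMap_apply_module]; fun_prop)
      (hmem.mono fun x hx => hx ε hε)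
  simpa only [AffineMap.lineMap_apply_module, sub_zero, one_smul, zero_smul, add_zero] using
    exists_integral_lt_of_frequently_tendsto_slope_atBot hconv hint <|
      (hfrontier.and_eventually (hωN.and hω₀int)).mono fun x hx =>
        tendsto_slope_surfTension_atBot_of_mem_frontier hx.2.1 hx.1 hx.2.2

/-- Variational core of the no-facets theorem: let `R ⊂ ℝ^d` be compact and let
`ω, ω₀` be measurable maps valued in the Newton polytope `N`, with `ω₀` valued in the
interior of `N` almost everywhere on `R`. If `{x ∈ R : ω(x) ∈ frontier N}` has positive
Lebesgue measure, then for some `ε ∈ (0,1)` the surface tension integral of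
`(1−ε)ω + εω₀` is strictly smaller than that of `ω`. -/
theorem no_facets_variational_core
    (d D : ℕ) (hd : 1 ≤ d) (hD : 1 ≤ D)
    (e : Fin D → (Fin d → ℝ))
    (hspan : Submodule.span ℝ (Set.range e) = ⊤)
    (hsum : ∑ j, e j = 0)
    (R : Set (Fin d → ℝ)) (hR : IsCompact R)
    (ω ω₀ : (Fin d → ℝ) → (Fin d → ℝ))
    (hω : Measurable ω) (hω₀ : Measurable ω₀)
    (hωN : ∀ x ∈ R, ω x ∈ convexHull ℝ (Set.range e))
    (hω₀N : ∀ x ∈ R, ω₀ x ∈ convexHull ℝ (Set.range e))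
    (hω₀int : ∀ᵐ x ∂(volume.restrict R), ω₀ x ∈ interior (convexHull ℝ (Set.range e)))
    (hA : 0 < volume {x ∈ R | ω x ∈ frontier (convexHull ℝ (Set.range e))}) :
    ∃ ε ∈ Set.Ioo (0 : ℝ) 1,
      ∫ x in R, surfTension d D e ((1 - ε) • ω x + ε • ω₀ x) <
        ∫ x in R, surfTension d D e (ω x) := by
  have : Fact (volume R < ⊤) := ⟨hR.measure_lt_top⟩
  exact no_facets_variational_core_general hω.aemeasurable hω₀.aemeasurable
    (ae_restrict_of_forall_mem hR.measurableSet hωN) hω₀int <|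
    frequently_ae_iff.2 (by rw [Measure.restrict_apply' hR.measurableSet, inter_comm]; exact hA.ne')
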